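/- arXiv:2510.11273 — 3 statements merged into one kernel-verified Lean document; each statement's English description precedes it below -/
import Mathlib

section
/- Let n ≥ 2, let r be an integer with (n+1)/2 < r ≤ n, let α ∈ (0, 1/2) and t = Φ⁻¹(1 − α/(n−r+1)). Fix θ₂,…,θₙ with θᵢ ≥ 0 for i = 2,…,r−1 and θᵢ = 0 for i = r,…,n, and for u ∈ ℝ let c(u) = P(#{i : Tᵢ ≤ −t} ≥ r or #{i : Tᵢ ≥ t} ≥ r) where T₁ ~ N(u,1), Tᵢ ~ N(θᵢ,1) are independent. Then c is differentiable and its derivative is strictly positive at every u > 0; consequently c is strictly increasing on (0, ∞). -/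
open MeasureTheory ProbabilityTheory

/-- The cumulative distribution function `Φ` of the standard normal distribution. -/
noncomputable def stdNormalCDF (x : ℝ) : ℝ :=
  ((gaussianReal 0 1) (Set.Iic x)).toReal

/-! Splitting off the first trial, `c(u) = Φ(-t - u) A + Φ(u - t) B + const`, where `A` and `B` are
the probabilities that exactly `r - 1` of the other observations lie in the lower, respectively the
upper, tail. So `c'(u) = φ(u - t) B - φ(-t - u) A`, and `φ(-t - u) < φ(u - t)` for `t, u > 0`; it
remains to see that `A ≤ B`.

For a null mean the two tails are equally likely, while a nonnegative mean makes the upper tail the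
more likely one. Now raising one success probability from `a` to `b` changes the mass at `k + 1` by
`(b - a) (w k - w (k + 1))`, where `w` is the mass function of the number of successes among the
remaining trials. The level of the test is so small that the number of tail events among the null
coordinates has a nonincreasing mass function, and adding `m` further trials keeps it nonincreasing
from `m` on. As at most `r - 1` coordinates besides the first are not null, all these changes are
nonnegative at `r - 1`. -/

section SuccessCount

open Polynomial

variable {ι : Type*} {p q : ι → ℝ} {s z : Finset ι} {i : ι} {k : ℕ}

/-- The probability generating function of the number of successes among independent trials indexed
by `s`, the `i`-th of which succeeds with probability `p i`: the coefficient of `X ^ k` is the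
probability of exactly `k` successes. -/
noncomputable def successGF (p : ι → ℝ) (s : Finset ι) : ℝ[X] :=
  ∏ i ∈ s, (C (p i) * X + C (1 - p i))

theorem successGF_congr (h : ∀ i ∈ s, p i = q i) : successGF p s = successGF q s :=
  Finset.prod_congr rfl fun i hi => by rw [h i hi]

theorem coeff_zero_successGF : (successGF p s).coeff 0 = ∏ i ∈ s, (1 - p i) := by
  simp [successGF, coeff_zero_prod]

theorem coeff_zero_successGF_insert [DecidableEq ι] (hi : i ∉ s) :
    (successGF p (insert i s)).coeff 0 = (1 - p i) * (successGF p s).coeff 0 := by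
  simp only [coeff_zero_successGF, Finset.prod_insert hi]

theorem coeff_succ_successGF_insert [DecidableEq ι] (hi : i ∉ s) (k : ℕ) :
    (successGF p (insert i s)).coeff (k + 1) =
      p i * (successGF p s).coeff k + (1 - p i) * (successGF p s).coeff (k + 1) := by
  simp only [successGF, Finset.prod_insert hi, add_mul, mul_assoc, coeff_add, coeff_C_mul,
    coeff_X_mul]

theorem coeff_successGF [DecidableEq ι] (p : ι → ℝ) (s : Finset ι) (k : ℕ) :
    (successGF p s).coeff k =
      ∑ S ∈ s.powersetCard k, (∏ i ∈ S, p i) * ∏ i ∈ s \ S, (1 - p i) := by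
  have expand : successGF p s =
      ∑ S ∈ s.powerset, C ((∏ i ∈ S, p i) * ∏ i ∈ s \ S, (1 - p i)) * X ^ S.card := by
    rw [successGF, Finset.prod_add]
    refine Finset.sum_congr rfl fun S _ => ?_
    rw [Finset.prod_mul_distrib, Finset.prod_const, C_mul, map_prod, map_prod]
    ring
  rw [expand, finsetSum_coeff, Finset.powersetCard_eq_filter, Finset.sum_filter]
  refine Finset.sum_congr rfl fun S _ => ?_
  rw [coeff_C_mul_X_pow]
  exact if_congr eq_comm rfl rfl

theorem coeff_successGF_pos (hp : ∀ i ∈ s, p i ∈ Set.Ioo 0 1) (hk : k ≤ s.card) :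
    0 < (successGF p s).coeff k := by
  classical
  rw [coeff_successGF]
  refine Finset.sum_pos (fun S hS => mul_pos ?_ ?_) (Finset.powersetCard_nonempty.2 hk)
  · exact Finset.prod_pos fun i hi => (hp i ((Finset.mem_powersetCard.1 hS).1 hi)).1
  · exact Finset.prod_pos fun i hi => sub_pos.2 (hp i (Finset.sdiff_subset hi)).2

theorem sum_range_coeff_successGF_insert [DecidableEq ι] (hi : i ∉ s) (r : ℕ) :
    ∑ k ∈ Finset.range (r + 1), (successGF p (insert i s)).coeff k =
      ∑ k ∈ Finset.range (r + 1), (successGF p s).coeff k - p i * (successGF p s).coeff r := by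
  induction r with
  | zero =>
    simp only [zero_add, Finset.sum_range_one, coeff_zero_successGF_insert hi]
    ring
  | succ r ih =>
    rw [Finset.sum_range_succ, ih, coeff_succ_successGF_insert hi, Finset.sum_range_succ _ (r + 1)]
    ring

theorem coeff_one_successGF (hp : ∀ i ∈ s, p i ≠ 1) :
    (successGF p s).coeff 1 = (successGF p s).coeff 0 * ∑ i ∈ s, p i / (1 - p i) := by
  classical
  induction s using Finset.induction_on with
  | empty => simp [successGF, coeff_one]
  | insert i s hi ih =>
    have hpi : 1 - p i ≠ 0 := sub_ne_zero.2 (hp i (Finset.mem_insert_self i s)).symm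
    rw [coeff_succ_successGF_insert hi, coeff_zero_successGF_insert hi, Finset.sum_insert hi,
      ih fun j hj => hp j (Finset.mem_insert_of_mem hj)]
    field_simp

theorem antitone_coeff_successGF (hp : ∀ i ∈ s, p i ∈ Set.Ico 0 1)
    (hodds : ∑ i ∈ s, p i / (1 - p i) ≤ 1) : Antitone (successGF p s).coeff := by
  classical
  induction s using Finset.induction_on with
  | empty =>
    refine antitone_nat_of_succ_le fun k => ?_
    simpa [successGF, coeff_one] using ite_nonneg zero_le_one le_rfl
  | insert i s hi ih =>
    have hps : ∀ j ∈ s, p j ∈ Set.Ico 0 1 := fun j hj => hp j (Finset.mem_insert_of_mem hj)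
    obtain ⟨hpi0, hpi1⟩ := hp i (Finset.mem_insert_self i s)
    have hodds_s : ∑ j ∈ s, p j / (1 - p j) ≤ 1 := by
      rw [Finset.sum_insert hi] at hodds
      linarith [div_nonneg hpi0 (sub_nonneg.2 hpi1.le)]
    have anti := ih hps hodds_s
    refine antitone_nat_of_succ_le fun k => ?_
    cases k with
    | zero =>
      rw [coeff_one_successGF fun j hj => (hp j hj).2.ne]
      refine mul_le_of_le_one_right ?_ hodds
      rw [coeff_zero_successGF]
      exact Finset.prod_nonneg fun j hj => sub_nonneg.2 (hp j hj).2.le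
    | succ k =>
      rw [coeff_succ_successGF_insert hi, coeff_succ_successGF_insert hi]
      exact add_le_add (mul_le_mul_of_nonneg_left (anti k.le_succ) hpi0)
        (mul_le_mul_of_nonneg_left (anti (k + 1).le_succ) (sub_nonneg.2 hpi1.le))

theorem antitoneOn_coeff_successGF_union [DecidableEq ι] (hsz : Disjoint s z)
    (hp : ∀ i ∈ s, p i ∈ Set.Icc 0 1) (hz : Antitone (successGF p z).coeff) :
    AntitoneOn (successGF p (s ∪ z)).coeff (Set.Ici s.card) := by
  induction s using Finset.induction_on with
  | empty => simpa only [Finset.empty_union] using hz.antitoneOn _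
  | insert i s hi ih =>
    obtain ⟨hiz, hsz⟩ := Finset.disjoint_insert_left.1 hsz
    have hisz : i ∉ s ∪ z := Finset.notMem_union.2 ⟨hi, hiz⟩
    obtain ⟨hpi0, hpi1⟩ := hp i (Finset.mem_insert_self i s)
    have anti := ih hsz fun j hj => hp j (Finset.mem_insert_of_mem hj)
    rw [Finset.card_insert_of_notMem hi, Finset.insert_union]
    refine antitoneOn_nat_Ici_of_succ_le fun k hk => ?_
    obtain ⟨k, rfl⟩ := Nat.exists_eq_add_one_of_ne_zero (by lia : k ≠ 0)
    have hk : s.card ≤ k := by lia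
    rw [coeff_succ_successGF_insert hisz, coeff_succ_successGF_insert hisz]
    exact add_le_add
      (mul_le_mul_of_nonneg_left (anti hk (hk.trans k.le_succ) k.le_succ) hpi0)
      (mul_le_mul_of_nonneg_left
        (anti (hk.trans k.le_succ) (by simp only [Set.mem_Ici]; lia) (k + 1).le_succ)
        (sub_nonneg.2 hpi1))

theorem coeff_successGF_union_le [DecidableEq ι] (hsz : Disjoint s z) (hq : ∀ i ∈ s, 0 ≤ q i)
    (hqp : ∀ i ∈ s, q i ≤ p i) (hp : ∀ i ∈ s, p i ≤ 1) (hqz : ∀ i ∈ z, q i = p i)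
    (hz : Antitone (successGF p z).coeff) (hk : s.card ≤ k) :
    (successGF q (s ∪ z)).coeff k ≤ (successGF p (s ∪ z)).coeff k := by
  induction s using Finset.induction_on generalizing k with
  | empty => rw [Finset.empty_union, successGF_congr hqz]
  | insert i s hi ih =>
    obtain ⟨hiz, hsz⟩ := Finset.disjoint_insert_left.1 hsz
    have hisz : i ∉ s ∪ z := Finset.notMem_union.2 ⟨hi, hiz⟩
    simp only [Finset.forall_mem_insert] at hq hqp hp
    rw [Finset.card_insert_of_notMem hi] at hk
    obtain ⟨k, rfl⟩ := Nat.exists_eq_add_one_of_ne_zero (by lia : k ≠ 0)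
    have hk : s.card ≤ k := by lia
    have le : ∀ {l}, s.card ≤ l →
        (successGF q (s ∪ z)).coeff l ≤ (successGF p (s ∪ z)).coeff l :=
      ih hsz hq.2 hqp.2 hp.2
    have anti : (successGF p (s ∪ z)).coeff (k + 1) ≤ (successGF p (s ∪ z)).coeff k :=
      antitoneOn_coeff_successGF_union hsz
        (fun j hj => ⟨(hq.2 j hj).trans (hqp.2 j hj), hp.2 j hj⟩) hz hk (hk.trans k.le_succ)
        k.le_succ
    rw [Finset.insert_union, coeff_succ_successGF_insert hisz, coeff_succ_successGF_insert hisz]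
    calc q i * (successGF q (s ∪ z)).coeff k + (1 - q i) * (successGF q (s ∪ z)).coeff (k + 1)
      _ ≤ q i * (successGF p (s ∪ z)).coeff k + (1 - q i) * (successGF p (s ∪ z)).coeff (k + 1) :=
        add_le_add (mul_le_mul_of_nonneg_left (le hk) hq.1)
          (mul_le_mul_of_nonneg_left (le (hk.trans k.le_succ))
            (sub_nonneg.2 (hqp.1.trans hp.1)))
      _ ≤ p i * (successGF p (s ∪ z)).coeff k +
          (1 - p i) * (successGF p (s ∪ z)).coeff (k + 1) := by
        linarith [mul_le_mul_of_nonneg_left anti (sub_nonneg.2 hqp.1)]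

end SuccessCount

section ProductMeasure

variable {ι : Type*} [Fintype ι] {Ω : ι → Type*} {A : ∀ i, Set (Ω i)} [∀ i, DecidablePred (· ∈ A i)]

theorem preimage_filter_mem_singleton [DecidableEq ι] (S : Finset ι) :
    (fun x : ∀ i, Ω i => Finset.univ.filter fun i => x i ∈ A i) ⁻¹' {S} =
      Set.univ.pi fun i => if i ∈ S then A i else (A i)ᶜ := by
  ext x
  simp only [Set.mem_preimage, Set.mem_singleton_iff, Finset.ext_iff, Finset.mem_filter,
    Finset.mem_univ, true_and, Set.mem_univ_pi]
  refine forall_congr' fun i => ?_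
  split_ifs with hi <;> simp [hi]

theorem disjoint_le_card_filter_mem {B : ∀ i, Set (Ω i)} [∀ i, DecidablePred (· ∈ B i)] {a b : ℕ}
    (hAB : ∀ i, Disjoint (A i) (B i)) (hab : Fintype.card ι < a + b) :
    Disjoint {x : ∀ i, Ω i | a ≤ (Finset.univ.filter fun i => x i ∈ A i).card}
      {x | b ≤ (Finset.univ.filter fun i => x i ∈ B i).card} := by
  classical
  refine Set.disjoint_left.2 fun x hA hB => ?_
  simp only [Set.mem_ofPred_eq] at hA hB
  have filters_disjoint : Disjoint (Finset.univ.filter fun i => x i ∈ A i)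
      (Finset.univ.filter fun i => x i ∈ B i) :=
    Finset.disjoint_filter.2 fun i _ hiA => Set.disjoint_left.1 (hAB i) hiA
  have card_le := Finset.card_le_univ
    ((Finset.univ.filter fun i => x i ∈ A i) ∪ Finset.univ.filter fun i => x i ∈ B i)
  rw [Finset.card_union_of_disjoint filters_disjoint] at card_le
  lia

variable [∀ i, MeasurableSpace (Ω i)]

theorem measurable_card_filter_mem (hA : ∀ i, MeasurableSet (A i)) :
    Measurable fun x : ∀ i, Ω i => (Finset.univ.filter fun i => x i ∈ A i).card := by
  simp only [Finset.card_filter]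
  exact Finset.measurable_sum _ fun i _ =>
    .ite (measurable_pi_apply i (hA i)) measurable_const measurable_const

variable {μ : ∀ i, Measure (Ω i)} [∀ i, IsProbabilityMeasure (μ i)]

theorem pi_real_preimage_filter_mem_singleton [DecidableEq ι] (hA : ∀ i, MeasurableSet (A i))
    (S : Finset ι) :
    (Measure.pi μ).real ((fun x => Finset.univ.filter fun i => x i ∈ A i) ⁻¹' {S}) =
      (∏ i ∈ S, (μ i).real (A i)) * ∏ i ∈ Finset.univ \ S, (1 - (μ i).real (A i)) := by
  rw [preimage_filter_mem_singleton, measureReal_def, Measure.pi_pi, ENNReal.toReal_prod,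
    ← Finset.prod_sdiff S.subset_univ, mul_comm]
  congr 1 <;> refine Finset.prod_congr rfl fun i hi => ?_
  · rw [if_pos hi, measureReal_def]
  · rw [if_neg (Finset.mem_sdiff.1 hi).2, ← measureReal_def, probReal_compl_eq_one_sub (hA i)]

theorem pi_real_card_filter_mem_eq (hA : ∀ i, MeasurableSet (A i)) (k : ℕ) :
    (Measure.pi μ).real ((fun x => (Finset.univ.filter fun i => x i ∈ A i).card) ⁻¹' {k}) =
      (successGF (fun i => (μ i).real (A i)) Finset.univ).coeff k := by
  classical
  have preimage_card : (fun x : ∀ i, Ω i => (Finset.univ.filter fun i => x i ∈ A i).card) ⁻¹' {k} =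
      (fun x => Finset.univ.filter fun i => x i ∈ A i) ⁻¹'
        ((Finset.univ.powersetCard k : Finset (Finset ι)) : Set (Finset ι)) := by
    ext x
    simp
  rw [coeff_successGF, preimage_card, ← sum_measureReal_preimage_singleton]
  · exact Finset.sum_congr rfl fun S _ => pi_real_preimage_filter_mem_singleton hA S
  · intro S _
    rw [preimage_filter_mem_singleton]
    refine .univ_pi fun i => ?_
    split_ifs
    exacts [hA i, (hA i).compl]

theorem pi_real_le_card_filter_mem (hA : ∀ i, MeasurableSet (A i)) (r : ℕ) :
    (Measure.pi μ).real {x | r ≤ (Finset.univ.filter fun i => x i ∈ A i).card} =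
      1 - ∑ k ∈ Finset.range r, (successGF (fun i => (μ i).real (A i)) Finset.univ).coeff k := by
  have compl_preimage : {x : ∀ i, Ω i | r ≤ (Finset.univ.filter fun i => x i ∈ A i).card} =
      ((fun x => (Finset.univ.filter fun i => x i ∈ A i).card) ⁻¹' (Finset.range r))ᶜ := by
    ext x
    simp
  rw [compl_preimage, probReal_compl_eq_one_sub
      (measurable_card_filter_mem hA (Finset.range r).measurableSet),
    ← sum_measureReal_preimage_singleton _
      fun k _ => measurable_card_filter_mem hA (measurableSet_singleton k)]
  simp only [pi_real_card_filter_mem_eq hA]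

end ProductMeasure

section StandardNormal

theorem hasDerivAt_integral_Iic {E : Type*} [NormedAddCommGroup E] [NormedSpace ℝ E]
    [CompleteSpace E] {f : ℝ → E} {x : ℝ} (hf : Integrable f) (hx : ContinuousAt f x) :
    HasDerivAt (fun b => ∫ y in Set.Iic b, f y) (f x) x := by
  have split : (fun b => ∫ y in Set.Iic b, f y) =
      fun b => (∫ y in (0 : ℝ)..b, f y) + ∫ y in Set.Iic 0, f y := by
    funext b
    rw [← intervalIntegral.integral_Iic_sub_Iic hf.integrableOn hf.integrableOn, sub_add_cancel]
  rw [split]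
  exact (intervalIntegral.integral_hasDerivAt_right hf.intervalIntegrable
    hf.aestronglyMeasurable.stronglyMeasurableAtFilter hx).add_const _

theorem gaussianPDFReal_lt_of_abs_sub_lt {m x y : ℝ} {v : NNReal} (hv : v ≠ 0)
    (h : |y - m| < |x - m|) : gaussianPDFReal m v x < gaussianPDFReal m v y := by
  unfold gaussianPDFReal
  have := sq_lt_sq.2 h
  have := Real.pi_pos
  gcongr

theorem hasDerivAt_stdNormalCDF (x : ℝ) : HasDerivAt stdNormalCDF (gaussianPDFReal 0 1 x) x := by
  have eq_integral : stdNormalCDF = fun b => ∫ y in Set.Iic b, gaussianPDFReal 0 1 y := by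
    funext b
    rw [stdNormalCDF, gaussianReal_apply_eq_integral _ one_ne_zero, ENNReal.toReal_ofReal]
    exact integral_nonneg fun y => gaussianPDFReal_nonneg 0 1 y
  have continuous_pdf : Continuous (gaussianPDFReal 0 1) := by
    unfold gaussianPDFReal
    fun_prop
  rw [eq_integral]
  exact hasDerivAt_integral_Iic (integrable_gaussianPDFReal 0 1) continuous_pdf.continuousAt

theorem strictMono_stdNormalCDF : StrictMono stdNormalCDF :=
  strictMono_of_hasDerivAt_pos hasDerivAt_stdNormalCDF fun x =>
    gaussianPDFReal_pos 0 1 x one_ne_zero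

theorem gaussianReal_real_Iic (m x : ℝ) :
    (gaussianReal m 1).real (Set.Iic x) = stdNormalCDF (x - m) := by
  rw [← zero_add m, ← gaussianReal_map_add_const, map_measureReal_apply (by fun_prop)
    measurableSet_Iic, Set.preimage_add_const_Iic, zero_add, stdNormalCDF, measureReal_def]

theorem gaussianReal_real_Ici (m x : ℝ) :
    (gaussianReal m 1).real (Set.Ici x) = stdNormalCDF (m - x) := by
  rw [← neg_neg m, ← gaussianReal_map_neg, map_measureReal_apply (by fun_prop) measurableSet_Ici,
    Set.neg_preimage, Set.neg_Ici, gaussianReal_real_Iic]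
  congr 1
  ring

theorem stdNormalCDF_neg (x : ℝ) : stdNormalCDF (-x) = 1 - stdNormalCDF x := by
  have := nullSingletonClass_gaussianReal (μ := 0) (v := 1) one_ne_zero
  rw [← zero_sub, ← gaussianReal_real_Ici, ← measureReal_congr Ioi_ae_eq_Ici, ← Set.compl_Iic,
    probReal_compl_eq_one_sub measurableSet_Iic, gaussianReal_real_Iic, sub_zero]

theorem stdNormalCDF_mem_Ioo (x : ℝ) : stdNormalCDF x ∈ Set.Ioo 0 1 := by
  have pos (y : ℝ) : 0 < stdNormalCDF y :=
    ENNReal.toReal_nonneg.trans_lt (strictMono_stdNormalCDF (sub_one_lt y))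
  refine ⟨pos x, sub_pos.1 ?_⟩
  rw [← stdNormalCDF_neg]
  exact pos (-x)

theorem half_lt_stdNormalCDF_iff {x : ℝ} : 1 / 2 < stdNormalCDF x ↔ 0 < x := by
  have half : stdNormalCDF 0 = 1 / 2 := by
    have := stdNormalCDF_neg 0
    rw [neg_zero] at this
    linarith
  rw [← half, strictMono_stdNormalCDF.lt_iff_lt]

end StandardNormal

section TwoSidedTest

variable {ι : Type*} [Fintype ι] {j : ι} {z : Finset ι} {r : ℕ} {t : ℝ} {θ : ι → ℝ}

/-- The probability that, for independent `Tᵢ ~ N(θ i, 1)`, at least `r` of the `Tᵢ` are at most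
`-t` or at least `r` of them are at least `t`. This is the type I error when fewer than `r` of the
means are nonzero. -/
noncomputable def twoSidedRejectionProb (θ : ι → ℝ) (r : ℕ) (t : ℝ) : ℝ :=
  (Measure.pi fun i => gaussianReal (θ i) 1).real
    {x | r ≤ (Finset.univ.filter fun i => x i ≤ -t).card ∨
         r ≤ (Finset.univ.filter fun i => t ≤ x i).card}

theorem twoSidedRejectionProb_eq (hr : Fintype.card ι < 2 * r) (ht : 0 < t) (θ : ι → ℝ) :
    twoSidedRejectionProb θ r t =
      (1 - ∑ k ∈ Finset.range r,
        (successGF (fun i => stdNormalCDF (-t - θ i)) Finset.univ).coeff k) +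
      (1 - ∑ k ∈ Finset.range r,
        (successGF (fun i => stdNormalCDF (θ i - t)) Finset.univ).coeff k) := by
  have lower := pi_real_le_card_filter_mem (μ := fun i => gaussianReal (θ i) 1)
    (A := fun _ => Set.Iic (-t)) (fun _ => measurableSet_Iic) r
  have upper := pi_real_le_card_filter_mem (μ := fun i => gaussianReal (θ i) 1)
    (A := fun _ => Set.Ici t) (fun _ => measurableSet_Ici) r
  have measurable_upper : MeasurableSet {x : ι → ℝ |
      r ≤ (Finset.univ.filter fun i => t ≤ x i).card} :=
    measurable_card_filter_mem (A := fun _ : ι => Set.Ici t) (fun _ => measurableSet_Ici)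
      measurableSet_Ici
  have tails_disjoint := disjoint_le_card_filter_mem (a := r) (b := r)
    (A := fun _ : ι => Set.Iic (-t)) (B := fun _ => Set.Ici t)
    (fun _ => Set.Iic_disjoint_Ici.2 (by linarith)) (by lia)
  simp only [Set.mem_Iic, Set.mem_Ici, gaussianReal_real_Iic, gaussianReal_real_Ici]
    at lower upper tails_disjoint
  rw [twoSidedRejectionProb, Set.ofPred_or, measureReal_union tails_disjoint measurable_upper,
    lower, upper]

variable [DecidableEq ι]

theorem sum_range_coeff_successGF_update (g : ℝ → ℝ) (θ : ι → ℝ) (j : ι) (u : ℝ) (r : ℕ) :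
    ∑ k ∈ Finset.range (r + 1),
        (successGF (fun i => g (Function.update θ j u i)) Finset.univ).coeff k =
      ∑ k ∈ Finset.range (r + 1), (successGF (fun i => g (θ i)) (Finset.univ.erase j)).coeff k -
        g u * (successGF (fun i => g (θ i)) (Finset.univ.erase j)).coeff r := by
  have erase_update : successGF (fun i => g (Function.update θ j u i)) (Finset.univ.erase j) =
      successGF (fun i => g (θ i)) (Finset.univ.erase j) :=
    successGF_congr fun i hi => by rw [Function.update_of_ne (Finset.ne_of_mem_erase hi)]
  nth_rw 1 [← Finset.insert_erase (Finset.mem_univ j)]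
  rw [sum_range_coeff_successGF_insert (Finset.notMem_erase j _), erase_update,
    Function.update_self]

theorem hasDerivAt_twoSidedRejectionProb_update (hr : Fintype.card ι < 2 * (r + 1)) (ht : 0 < t)
    (θ : ι → ℝ) (j : ι) (u : ℝ) :
    HasDerivAt (fun u => twoSidedRejectionProb (Function.update θ j u) (r + 1) t)
      (gaussianPDFReal 0 1 (u - t) *
          (successGF (fun i => stdNormalCDF (θ i - t)) (Finset.univ.erase j)).coeff r -
        gaussianPDFReal 0 1 (-t - u) *
          (successGF (fun i => stdNormalCDF (-t - θ i)) (Finset.univ.erase j)).coeff r) u := by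
  simp only [twoSidedRejectionProb_eq hr ht,
    sum_range_coeff_successGF_update (fun x => stdNormalCDF (-t - x)),
    sum_range_coeff_successGF_update (fun x => stdNormalCDF (x - t))]
  have lower : HasDerivAt (fun u => stdNormalCDF (-t - u)) (-gaussianPDFReal 0 1 (-t - u)) u :=
    (hasDerivAt_stdNormalCDF (-t - u)).comp_const_sub (-t) u
  have upper : HasDerivAt (fun u => stdNormalCDF (u - t)) (gaussianPDFReal 0 1 (u - t)) u :=
    (hasDerivAt_stdNormalCDF (u - t)).comp_sub_const u t
  refine ((((lower.mul_const _).const_sub _).const_sub 1).add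
    (((upper.mul_const _).const_sub _).const_sub 1)).congr_deriv ?_
  ring

theorem coeff_successGF_lower_tail_le_upper_tail (hjz : j ∉ z)
    (hrz : Fintype.card ι ≤ z.card + r + 1)
    (hθ : ∀ i ∉ z, i ≠ j → 0 ≤ θ i) (hθz : ∀ i ∈ z, θ i = 0)
    (htz : (z.card + 1) * stdNormalCDF (-t) ≤ 1) :
    (successGF (fun i => stdNormalCDF (-t - θ i)) (Finset.univ.erase j)).coeff r ≤
      (successGF (fun i => stdNormalCDF (θ i - t)) (Finset.univ.erase j)).coeff r := by
  have hz : z ⊆ Finset.univ.erase j := fun i hi =>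
    Finset.mem_erase.2 ⟨fun hij => hjz (hij ▸ hi), Finset.mem_univ i⟩
  have upper_z : ∀ i ∈ z, stdNormalCDF (θ i - t) = stdNormalCDF (-t) := fun i hi => by
    rw [hθz i hi, zero_sub]
  have odds_z : ∑ i ∈ z, stdNormalCDF (θ i - t) / (1 - stdNormalCDF (θ i - t)) ≤ 1 := by
    rw [Finset.sum_congr rfl fun i hi => by rw [upper_z i hi], Finset.sum_const, nsmul_eq_mul,
      mul_div_assoc', div_le_one (sub_pos.2 (stdNormalCDF_mem_Ioo _).2)]
    linarith
  rw [← Finset.sdiff_union_of_subset hz]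
  refine coeff_successGF_union_le Finset.sdiff_disjoint (fun i _ => (stdNormalCDF_mem_Ioo _).1.le)
    (fun i hi => strictMono_stdNormalCDF.monotone ?_) (fun i _ => (stdNormalCDF_mem_Ioo _).2.le)
    (fun i hi => by rw [hθz i hi, sub_zero, zero_sub])
    (antitone_coeff_successGF (fun i _ => Set.Ioo_subset_Ico_self (stdNormalCDF_mem_Ioo _)) odds_z)
    ?_
  · obtain ⟨hij, hiz⟩ := Finset.mem_sdiff.1 hi
    linarith [hθ i hiz (Finset.ne_of_mem_erase hij)]
  · rw [Finset.card_sdiff_of_subset hz, Finset.card_erase_of_mem (Finset.mem_univ j),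
      Finset.card_univ]
    lia

theorem deriv_twoSidedRejectionProb_update_pos (hr : Fintype.card ι < 2 * r)
    (hrι : r ≤ Fintype.card ι) (hjz : j ∉ z) (hrz : Fintype.card ι ≤ z.card + r)
    (hθ : ∀ i ∉ z, i ≠ j → 0 ≤ θ i) (hθz : ∀ i ∈ z, θ i = 0) (ht : 0 < t)
    (htz : (z.card + 1) * stdNormalCDF (-t) ≤ 1) {u : ℝ} (hu : 0 < u) :
    0 < deriv (fun u => twoSidedRejectionProb (Function.update θ j u) r t) u := by
  obtain ⟨r, rfl⟩ := Nat.exists_eq_add_one_of_ne_zero (by lia : r ≠ 0)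
  rw [(hasDerivAt_twoSidedRejectionProb_update hr ht θ j u).deriv, sub_pos]
  have pdf_lt : gaussianPDFReal 0 1 (-t - u) < gaussianPDFReal 0 1 (u - t) := by
    refine gaussianPDFReal_lt_of_abs_sub_lt one_ne_zero (sq_lt_sq.1 ?_)
    linarith [mul_pos ht hu]
  have upper_pos :
      0 < (successGF (fun i => stdNormalCDF (θ i - t)) (Finset.univ.erase j)).coeff r :=
    coeff_successGF_pos (fun i _ => stdNormalCDF_mem_Ioo _) <| by
      rw [Finset.card_erase_of_mem (Finset.mem_univ j), Finset.card_univ]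
      lia
  exact mul_lt_mul_of_lt_of_le_of_nonneg_of_pos pdf_lt
    (coeff_successGF_lower_tail_le_upper_tail hjz hrz hθ hθz htz)
    (gaussianPDFReal_nonneg 0 1 (-t - u)) upper_pos

theorem type_one_error_increasing_in_first_mean_general (hr : Fintype.card ι < 2 * r)
    (hrι : r ≤ Fintype.card ι) (hjz : j ∉ z) (hrz : Fintype.card ι ≤ z.card + r)
    (hθ : ∀ i ∉ z, i ≠ j → 0 ≤ θ i) (hθz : ∀ i ∈ z, θ i = 0) (ht : 0 < t)
    (htz : (z.card + 1) * stdNormalCDF (-t) ≤ 1) :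
    Differentiable ℝ (fun u => twoSidedRejectionProb (Function.update θ j u) r t) ∧
    (∀ u : ℝ, 0 < u → 0 < deriv (fun u => twoSidedRejectionProb (Function.update θ j u) r t) u) ∧
    StrictMonoOn (fun u => twoSidedRejectionProb (Function.update θ j u) r t) (Set.Ioi 0) := by
  have deriv_pos : ∀ u : ℝ, 0 < u →
      0 < deriv (fun u => twoSidedRejectionProb (Function.update θ j u) r t) u := fun u hu =>
    deriv_twoSidedRejectionProb_update_pos hr hrι hjz hrz hθ hθz ht htz hu
  obtain ⟨r, rfl⟩ := Nat.exists_eq_add_one_of_ne_zero (by lia : r ≠ 0)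
  have differentiable : Differentiable ℝ
      fun u => twoSidedRejectionProb (Function.update θ j u) (r + 1) t := fun u =>
    (hasDerivAt_twoSidedRejectionProb_update hr ht θ j u).differentiableAt
  refine ⟨differentiable, deriv_pos, strictMonoOn_of_deriv_pos (convex_Ioi 0)
    differentiable.continuous.continuousOn fun u hu => deriv_pos u ?_⟩
  rwa [interior_Ioi] at hu

end TwoSidedTest

theorem pos_and_mul_stdNormalCDF_neg_le_one {m α t : ℝ} (hm : 1 ≤ m) (hα0 : 0 ≤ α)
    (hα1 : α < 1 / 2) (ht : stdNormalCDF t = 1 - α / m) :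
    0 < t ∧ (m + 1) * stdNormalCDF (-t) ≤ 1 := by
  have div_le : α / m ≤ α := div_le_self hα0 hm
  refine ⟨half_lt_stdNormalCDF_iff.1 (by linarith), ?_⟩
  rw [stdNormalCDF_neg, ht, sub_sub_cancel, add_mul, one_mul, mul_div_cancel₀ α (by positivity)]
  linarith

/-- **Monotonicity of the Type I error in the first positive mean.** Let `(n+1)/2 < r ≤ n`,
`α ∈ (0,1/2)`, `t = Φ⁻¹(1 − α/(n−r+1))`, and fix `θ₂,…,θₙ` with `θᵢ ≥ 0` for
`i = 2,…,r−1` and `θᵢ = 0` for `i = r,…,n` (0-indexed below). For `u ∈ ℝ` let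
`c(u) = P(#{i : Tᵢ ≤ −t} ≥ r or #{i : Tᵢ ≥ t} ≥ r)` with `T₁ ~ N(u,1)`, `Tᵢ ~ N(θᵢ,1)`
independent. Then `c` is differentiable, `c' (u) > 0` for every `u > 0`, and `c` is
strictly increasing on `(0, ∞)`. -/
theorem type_one_error_increasing_in_first_mean
    (n r : ℕ) (hn : 2 ≤ n) (hr1 : ((n : ℝ) + 1) / 2 < (r : ℝ)) (hrn : r ≤ n)
    (α : ℝ) (hα0 : 0 < α) (hα1 : α < 1 / 2)
    (t : ℝ) (ht : stdNormalCDF t = 1 - α / ((n : ℝ) - (r : ℝ) + 1))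
    (θ : Fin n → ℝ)
    (hθpos : ∀ i : Fin n, 1 ≤ (i : ℕ) → (i : ℕ) + 1 < r → 0 ≤ θ i)
    (hθzero : ∀ i : Fin n, r ≤ (i : ℕ) + 1 → θ i = 0) :
    Differentiable ℝ
      (fun u : ℝ =>
        ((Measure.pi fun i : Fin n =>
            gaussianReal (if (i : ℕ) = 0 then u else θ i) 1)
          {x | r ≤ (Finset.univ.filter fun i : Fin n => x i ≤ -t).card ∨
               r ≤ (Finset.univ.filter fun i : Fin n => t ≤ x i).card}).toReal) ∧
    (∀ u : ℝ, 0 < u →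
      0 < deriv
        (fun u : ℝ =>
          ((Measure.pi fun i : Fin n =>
              gaussianReal (if (i : ℕ) = 0 then u else θ i) 1)
            {x | r ≤ (Finset.univ.filter fun i : Fin n => x i ≤ -t).card ∨
                 r ≤ (Finset.univ.filter fun i : Fin n => t ≤ x i).card}).toReal) u) ∧
    StrictMonoOn
      (fun u : ℝ =>
        ((Measure.pi fun i : Fin n =>
            gaussianReal (if (i : ℕ) = 0 then u else θ i) 1)
          {x | r ≤ (Finset.univ.filter fun i : Fin n => x i ≤ -t).card ∨
               r ≤ (Finset.univ.filter fun i : Fin n => t ≤ x i).card}).toReal)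
      (Set.Ioi 0) := by
  have hm : (1 : ℝ) ≤ n - r + 1 := by linarith [show (r : ℝ) ≤ n from mod_cast hrn]
  obtain ⟨t_pos, level⟩ := pos_and_mul_stdNormalCDF_neg_le_one hm hα0.le hα1 ht
  have hr : n + 1 < 2 * r := by
    rw [div_lt_iff₀' two_pos] at hr1
    exact_mod_cast hr1
  let z : Finset (Fin n) := Finset.Ici ⟨r - 1, by lia⟩
  have mem_z (i : Fin n) : i ∈ z ↔ r ≤ i + 1 := by
    rw [Finset.mem_Ici, Fin.le_def, tsub_le_iff_right]
  have card_z : z.card = n - r + 1 := by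
    rw [Fin.card_Ici]
    lia
  have nonneg_notMem_z (i : Fin n) (hi : i ∉ z) (hi0 : i ≠ ⟨0, by lia⟩) : 0 ≤ θ i :=
    hθpos i (by rw [ne_eq, Fin.ext_iff] at hi0; lia) (by rw [mem_z] at hi; lia)
  have general := type_one_error_increasing_in_first_mean_general
    (r := r) (z := z) (by rw [Fintype.card_fin]; lia) (by rwa [Fintype.card_fin])
    (by rw [mem_z]; lia) (by rw [card_z, Fintype.card_fin]; lia) nonneg_notMem_z
    (fun i hi => hθzero i ((mem_z i).1 hi)) t_pos (by rw [card_z]; push_cast [hrn]; exact level)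
  simpa only [twoSidedRejectionProb, Function.update_apply, Fin.ext_iff, measureReal_def]
    using general
end

section
/- Let n ≥ 1, let r be an integer with (n+1)/2 < r ≤ n, let α ∈ (0, 1/2) and t = Φ⁻¹(1 − α/(n−r+1)). For θ ∈ ℝⁿ let c(θ) = P(#{i : Tᵢ ≤ −t} ≥ r or #{i : Tᵢ ≥ t} ≥ r), where T₁,…,Tₙ are independent with Tᵢ ~ N(θᵢ, 1). For s ≥ 0 let θ^(s) ∈ Θ₀ᵇ be the vector with θᵢ = s for i = 1,…,r−1 and θᵢ = 0 for i = r,…,n. Then lim_{s→∞} c(θ^(s)) = 1 − Φ(t)^{n−r+1}. -/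
open MeasureTheory ProbabilityTheory Filter

/-!
Off the event that one of the first `r - 1` coordinates is at most `max (-t) t`, whose probability
tends to zero, these coordinates all exceed `t` and none of them is at most `-t`. There the left
count is at most `n - r + 1 < r`, so rejection happens exactly when one of the `n - r + 1` null
coordinates reaches `t`. By independence that event has probability `1 - Φ(t) ^ (n - r + 1)`.
-/

open scoped Topology Finset NNReal

section NegligibleEvent

variable {Ω κ : Type*} [MeasurableSpace Ω] {A B C : Set Ω}

lemma abs_measureReal_sub_le_of_forall_notMem_iff {μ : Measure Ω} [IsFiniteMeasure μ]
    (h : ∀ x ∉ C, (x ∈ A ↔ x ∈ B)) : |μ.real A - μ.real B| ≤ μ.real C := by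
  have real_le_add {D E : Set Ω} (hDE : ∀ x ∉ C, x ∈ D → x ∈ E) :
      μ.real D ≤ μ.real E + μ.real C :=
    (measureReal_mono fun x hx => or_iff_not_imp_right.2 fun hxC => hDE x hxC hx).trans
      (measureReal_union_le E C)
  have hAB := real_le_add fun x hx => (h x hx).1
  have hBA := real_le_add fun x hx => (h x hx).2
  exact abs_sub_le_iff.2 ⟨by linarith, by linarith⟩

lemma tendsto_measureReal_of_forall_notMem_iff {μ : κ → Measure Ω} [∀ s, IsFiniteMeasure (μ s)]
    {l : Filter κ} {p : ℝ} (h : ∀ x ∉ C, (x ∈ A ↔ x ∈ B))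
    (hC : Tendsto (fun s => (μ s).real C) l (𝓝 0))
    (hB : Tendsto (fun s => (μ s).real B) l (𝓝 p)) :
    Tendsto (fun s => (μ s).real A) l (𝓝 p) := by
  have hsub : Tendsto (fun s => (μ s).real A - (μ s).real B) l (𝓝 0) :=
    squeeze_zero_norm (fun _ => abs_measureReal_sub_le_of_forall_notMem_iff h) hC
  simpa using hsub.add hB

end NegligibleEvent

section ProductMeasure

variable {ι κ : Type*} [Fintype ι] {α : ι → Type*} [∀ i, MeasurableSpace (α i)]
  {A : ∀ i, Set (α i)}

lemma measureReal_pi_exists_mem (ν : ∀ i, Measure (α i)) [∀ i, IsProbabilityMeasure (ν i)]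
    (hA : ∀ i, MeasurableSet (A i)) (T : Finset ι) :
    (Measure.pi ν).real {x | ∃ i ∈ T, x i ∈ A i} = 1 - ∏ i ∈ T, (ν i).real (A i)ᶜ := by
  have hcompl : {x | ∃ i ∈ T, x i ∈ A i} = ((T : Set ι).pi fun i => (A i)ᶜ)ᶜ := by
    ext x
    simp [Set.mem_pi]
  rw [hcompl, probReal_compl_eq_one_sub
    (MeasurableSet.pi T.countable_toSet fun i _ => (hA i).compl), measureReal_def,
    Measure.pi_pi_finset, ENNReal.toReal_prod]
  rfl

lemma tendsto_measureReal_pi_exists_mem {ν : κ → ∀ i, Measure (α i)}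
    [∀ s i, IsProbabilityMeasure (ν s i)] {l : Filter κ} {T : Finset ι} {p : ι → ℝ}
    (hA : ∀ i, MeasurableSet (A i))
    (hp : ∀ i ∈ T, Tendsto (fun s => (ν s i).real (A i)ᶜ) l (𝓝 (p i))) :
    Tendsto (fun s => (Measure.pi (ν s)).real {x | ∃ i ∈ T, x i ∈ A i}) l
      (𝓝 (1 - ∏ i ∈ T, p i)) := by
  simp only [measureReal_pi_exists_mem _ hA]
  exact (tendsto_finsetProd T hp).const_sub 1

end ProductMeasure

section Gaussian

lemma tendsto_measureReal_map_add_const_Ioi (μ : Measure ℝ) [IsProbabilityMeasure μ] (c : ℝ) :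
    Tendsto (fun s => (μ.map (· + s)).real (Set.Ioi c)) atTop (𝓝 1) := by
  have hcdf (s : ℝ) : (μ.map (· + s)).real (Set.Ioi c) = 1 - cdf μ (c - s) := by
    rw [map_measureReal_apply (measurable_add_const s) measurableSet_Ioi,
      Set.preimage_add_const_Ioi, ← Set.compl_Iic, probReal_compl_eq_one_sub measurableSet_Iic,
      cdf_eq_real]
  have hshift : Tendsto (fun s : ℝ => c - s) atTop atBot := by
    simpa only [sub_eq_add_neg] using tendsto_atBot_add_const_left atTop c tendsto_neg_atTop_atBot
  simpa [hcdf] using ((tendsto_cdf_atBot μ).comp hshift).const_sub 1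

lemma tendsto_measureReal_gaussianReal_Ioi (v : ℝ≥0) (c : ℝ) :
    Tendsto (fun m => (gaussianReal m v).real (Set.Ioi c)) atTop (𝓝 1) := by
  simpa [gaussianReal_map_add_const] using
    tendsto_measureReal_map_add_const_Ioi (gaussianReal 0 v) c

lemma measureReal_gaussianReal_Iio (t : ℝ) :
    (gaussianReal 0 1).real (Set.Iio t) = stdNormalCDF t :=
  have := nullSingletonClass_gaussianReal (μ := 0) one_ne_zero
  measureReal_congr Iio_ae_eq_Iic

end Gaussian

section Counting

variable {ι : Type*} [Fintype ι] [DecidableEq ι] {S : Finset ι}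

lemma card_lt_card_filter_or_iff_exists_mem_compl {p q : ι → Prop}
    [DecidablePred p] [DecidablePred q] (hS : #Sᶜ ≤ #S) (hp : ∀ i ∈ S, ¬ p i) (hq : ∀ i ∈ S, q i) :
    (#S < #{i | p i} ∨ #S < #{i | q i}) ↔ ∃ i ∈ Sᶜ, q i := by
  have card_p_le : #{i | p i} ≤ #S :=
    (Finset.card_le_card fun i hi => Finset.mem_compl.2 fun hiS =>
      hp i hiS (Finset.mem_filter.1 hi).2).trans hS
  have S_subset : S ⊆ ({i | q i} : Finset ι) := fun i hi => by simpa using hq i hi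
  rw [or_iff_right card_p_le.not_gt]
  constructor
  · intro hlt
    obtain ⟨i, hiq, hiS⟩ := Finset.exists_mem_notMem_of_card_lt_card hlt
    exact ⟨i, by simpa using hiS, by simpa using hiq⟩
  · rintro ⟨i, hiS, hiq⟩
    exact Finset.card_lt_card <|
      (Finset.ssubset_iff_of_subset S_subset).2 ⟨i, by simpa using hiq, by simpa using hiS⟩

lemma card_filter_val_add_one_lt {n r : ℕ} (hr : 1 ≤ r) (hrn : r ≤ n) :
    #{i : Fin n | (i : ℕ) + 1 < r} + 1 = r := by
  simp only [← Nat.lt_sub_iff_add_lt, Fin.card_filter_val_lt]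
  omega

end Counting

theorem limit_type_one_error_on_boundary_general {ι κ : Type*} [Fintype ι] [DecidableEq ι]
    {l : Filter κ} {ν : κ → ι → Measure ℝ} [∀ s i, IsProbabilityMeasure (ν s i)]
    {S : Finset ι} {r : ℕ} {a b : ℝ} {p : ι → ℝ} (hr : #S + 1 = r) (hS : #Sᶜ ≤ #S)
    (hν : ∀ i ∈ S, Tendsto (fun s => (ν s i).real (Set.Ioi (max a b))) l (𝓝 1))
    (hp : ∀ i ∈ Sᶜ, Tendsto (fun s => (ν s i).real (Set.Iio b)) l (𝓝 (p i))) :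
    Tendsto
      (fun s => (Measure.pi (ν s)).real {x | r ≤ #{i | x i ≤ a} ∨ r ≤ #{i | b ≤ x i}})
      l (𝓝 (1 - ∏ i ∈ Sᶜ, p i)) := by
  subst hr
  have hlow : Tendsto (fun s => (Measure.pi (ν s)).real {x | ∃ i ∈ S, x i ∈ Set.Iic (max a b)})
      l (𝓝 0) := by
    simpa using tendsto_measureReal_pi_exists_mem (p := 1)
      (A := fun _ => Set.Iic (max a b)) (fun _ => measurableSet_Iic) (by simpa using hν)
  have hnull : Tendsto (fun s => (Measure.pi (ν s)).real {x | ∃ i ∈ Sᶜ, x i ∈ Set.Ici b})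
      l (𝓝 (1 - ∏ i ∈ Sᶜ, p i)) :=
    tendsto_measureReal_pi_exists_mem (A := fun _ => Set.Ici b) (fun _ => measurableSet_Ici)
      (by simpa using hp)
  refine tendsto_measureReal_of_forall_notMem_iff (fun x hx => ?_) hlow hnull
  have hgt : ∀ i ∈ S, a < x i ∧ b < x i := by simpa using hx
  exact card_lt_card_filter_or_iff_exists_mem_compl hS (fun i hi => (hgt i hi).1.not_ge)
    fun i hi => (hgt i hi).2.le

theorem tendsto_measureReal_pi_gaussianReal_le_card_filter_or {ι κ : Type*} [Fintype ι]
    [DecidableEq ι] {l : Filter κ} {θ : κ → ι → ℝ} {S : Finset ι} {r : ℕ} {a b : ℝ}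
    (hr : #S + 1 = r) (hS : #Sᶜ ≤ #S) (hθ : ∀ i ∈ S, Tendsto (fun s => θ s i) l atTop)
    (hθ₀ : ∀ i ∉ S, ∀ s, θ s i = 0) :
    Tendsto
      (fun s => (Measure.pi fun i => gaussianReal (θ s i) 1).real
        {x | r ≤ #{i | x i ≤ a} ∨ r ≤ #{i | b ≤ x i}})
      l (𝓝 (1 - stdNormalCDF b ^ #Sᶜ)) := by
  rw [← Finset.prod_const]
  refine limit_type_one_error_on_boundary_general hr hS (fun i hi => ?_) fun i hi => ?_
  · exact (tendsto_measureReal_gaussianReal_Ioi 1 (max a b)).comp (hθ i hi)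
  · simp only [hθ₀ i (Finset.mem_compl.1 hi), measureReal_gaussianReal_Iio, tendsto_const_nhds]

/-- **Limiting Type I error on the boundary of the null.** Let `(n+1)/2 < r ≤ n`,
`α ∈ (0,1/2)`, `t = Φ⁻¹(1 − α/(n−r+1))` and for `s ≥ 0` let `θ⁽ˢ⁾ ∈ Θ₀ᵇ` have its first
`r−1` coordinates equal to `s` and the rest `0`. With independent `Tᵢ ~ N(θ⁽ˢ⁾ᵢ, 1)`
(modelled by the product measure), the rejection probability
`c(θ⁽ˢ⁾) = P(#{i : Tᵢ ≤ −t} ≥ r or #{i : Tᵢ ≥ t} ≥ r)` tends to `1 − Φ(t)^{n−r+1}` as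
`s → ∞`. -/
theorem limit_type_one_error_on_boundary
    (n r : ℕ) (hn : 1 ≤ n) (hr1 : ((n : ℝ) + 1) / 2 < (r : ℝ)) (hrn : r ≤ n)
    (α : ℝ) (hα0 : 0 < α) (hα1 : α < 1 / 2)
    (t : ℝ) (ht : stdNormalCDF t = 1 - α / ((n : ℝ) - (r : ℝ) + 1)) :
    Tendsto
      (fun s : ℝ =>
        ((Measure.pi fun i : Fin n =>
            gaussianReal (if (i : ℕ) + 1 < r then s else 0) 1)
          {x | r ≤ (Finset.univ.filter fun i : Fin n => x i ≤ -t).card ∨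
               r ≤ (Finset.univ.filter fun i : Fin n => t ≤ x i).card}).toReal)
      atTop
      (nhds (1 - stdNormalCDF t ^ (n - r + 1))) := by
  have hr : n + 1 < 2 * r := by exact_mod_cast (by linarith : (n : ℝ) + 1 < 2 * r)
  have hcard := card_filter_val_add_one_lt (by omega) hrn
  have hcompl : #({i : Fin n | (i : ℕ) + 1 < r} : Finset (Fin n))ᶜ = n - r + 1 := by
    rw [Finset.card_compl, Fintype.card_fin]
    omega
  rw [← hcompl]
  exact tendsto_measureReal_pi_gaussianReal_le_card_filter_or hcard (by omega)
    (fun i hi => tendsto_id.congr fun s => (if_pos (Finset.mem_filter.1 hi).2).symm)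
    fun i hi s => if_neg (by simpa using hi)
end

section
/- Let n ≥ 1, let r be an integer with (n+1)/2 < r ≤ n, let α ∈ (0, 1/2) and t = Φ⁻¹(1 − α/(n−r+1)). For θ ∈ ℝⁿ let c(θ) = P(#{i : Tᵢ ≤ −t} ≥ r or #{i : Tᵢ ≥ t} ≥ r), where T₁,…,Tₙ are independent with Tᵢ ~ N(θᵢ, 1). Then sup{c(θ) : θ ∈ Θ₀ᵇ} = 1 − (1 − α/(n−r+1))^{n−r+1}; moreover 1 − (1 − α/(n−r+1))^{n−r+1} ≤ α, with equality if and only if r = n. -/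
open MeasureTheory ProbabilityTheory

/-!
Call the coordinates whose mean is fixed at `0` null (they form the set `N`) and the remaining
`r - 1` free. Condition on the free coordinates and let `l` and `u` be the numbers of them in the
lower and the upper tail. Since `l + u ≤ r - 1` and there are at most `r - 1` null coordinates, the
latter can be split into at most `r - 1 - l` of them, required to avoid the upper tail, and at most
`r - 1 - u` others, required to avoid the lower tail. Under this requirement neither tail is reached
`r` times, and its probability is at least `Φ(t) ^ (n - r + 1)` whatever the free coordinates are.
Conversely, as the free means tend to `∞`, all free coordinates lie in the upper tail with
probability tending to `1`, and then one null coordinate in the upper tail leads to rejection.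
-/

open Finset Filter Topology
open scoped ENNReal

section RejectionRegion

variable {ι X : Type*} [Fintype ι]

/-- The rejection region of the directional replicability test with lower tail `L`, upper tail `U`
and replicability level `r`: at least `r` of the observations lie in `L`, or at least `r` in `U`. -/
def rejectionRegion (L U : Set X) [DecidablePred (· ∈ L)] [DecidablePred (· ∈ U)] (r : ℕ) :
    Set (ι → X) :=
  {x | r ≤ #{i | x i ∈ L} ∨ r ≤ #{i | x i ∈ U}}

lemma measurable_card_filter_mem_s12 [MeasurableSpace X] {S : Set X} [DecidablePred (· ∈ S)]
    (hS : MeasurableSet S) : Measurable fun x : ι → X => #{i | x i ∈ S} := by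
  simp_rw [card_filter]
  exact Finset.measurable_sum _ fun i _ =>
    Measurable.ite (measurable_pi_apply i hS) measurable_const measurable_const

variable {L U : Set X} [DecidablePred (· ∈ L)] [DecidablePred (· ∈ U)]

lemma measurableSet_rejectionRegion [MeasurableSpace X] (hL : MeasurableSet L)
    (hU : MeasurableSet U) (r : ℕ) :
    MeasurableSet (rejectionRegion L U r : Set (ι → X)) :=
  (measurableSet_le measurable_const (measurable_card_filter_mem_s12 hL)).union
    (measurableSet_le measurable_const (measurable_card_filter_mem_s12 hU))

variable [DecidableEq ι]

lemma card_filter_mem_le_of_eqOn_compl {N A : Finset ι} {x z : ι → X}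
    (hzx : ∀ i ∉ N, z i = x i) (hzA : ∀ i ∈ A, z i ∉ U) :
    #{i | z i ∈ U} ≤ #{i ∈ Nᶜ | x i ∈ U} + #(N \ A) := by
  refine (card_le_card fun i hi => ?_).trans (card_union_le _ _)
  rw [mem_filter_univ] at hi
  rw [mem_union, mem_filter, mem_compl, Finset.mem_sdiff]
  by_cases hiN : i ∈ N
  · exact .inr ⟨hiN, fun hiA => hzA i hiA hi⟩
  · exact .inl ⟨hiN, hzx i hiN ▸ hi⟩

lemma exists_subset_notMem_rejectionRegion {N : Finset ι} (hN : #N ≤ #Nᶜ) (hLU : Disjoint L U)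
    (x : ι → X) :
    ∃ A ⊆ N, ∀ z : ι → X, (∀ i ∉ N, z i = x i) → (∀ i ∈ A, z i ∉ U) → (∀ i ∈ N \ A, z i ∉ L) →
      z ∉ rejectionRegion L U (#Nᶜ + 1) := by
  have hfree : #{i ∈ Nᶜ | x i ∈ L} + #{i ∈ Nᶜ | x i ∈ U} ≤ #Nᶜ := by
    rw [← card_union_of_disjoint]
    · exact card_le_card (union_subset (filter_subset _ _) (filter_subset _ _))
    · exact disjoint_filter.2 fun i _ hiL hiU => Set.disjoint_left.1 hLU hiL hiU
  obtain ⟨A, hAN, hA⟩ :=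
    exists_subset_card_eq (min_le_left #N (#Nᶜ - #{i ∈ Nᶜ | x i ∈ L}))
  refine ⟨A, hAN, fun z hzx hzU hzL hz => ?_⟩
  have hU := card_filter_mem_le_of_eqOn_compl hzx hzU
  have hL := card_filter_mem_le_of_eqOn_compl hzx hzL
  rw [Finset.sdiff_sdiff_eq_self hAN] at hL
  rw [card_sdiff_of_subset hAN] at hU
  rcases hz with hz | hz <;> omega

end RejectionRegion

section ProductMeasure

variable {ι : Type*} [Fintype ι]

lemma le_pi_of_forall_exists_box {X : ι → Type*} [∀ i, MeasurableSpace (X i)]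
    (μ : ∀ i, Measure (X i)) [∀ i, IsProbabilityMeasure (μ i)] (p : ι → Prop) [DecidablePred p]
    {S : Set (∀ i, X i)} (hS : MeasurableSet S) {c : ℝ≥0∞}
    (h : ∀ x : ∀ i, X i, ∃ B : ∀ i, Set (X i), c ≤ ∏ i with p i, μ i (B i) ∧
      ∀ z : ∀ i, X i, (∀ i, ¬ p i → z i = x i) → (∀ i, p i → z i ∈ B i) → z ∈ S) :
    c ≤ Measure.pi μ S := by
  let e := MeasurableEquiv.piEquivPiSubtypeProd X p
  have he : MeasurePreserving e.symm _ (Measure.pi μ) :=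
    (measurePreserving_piEquivPiSubtypeProd μ p).symm
  obtain ⟨x₀⟩ := nonempty_of_isProbabilityMeasure (Measure.pi μ)
  rw [← he.measure_preimage hS.nullMeasurableSet, Measure.prod_apply_symm (he.measurable hS)]
  refine le_trans (by simp) (lintegral_mono (f := fun _ => c) fun y => ?_)
  obtain ⟨B, hc, hB⟩ := h (e.symm ((e x₀).1, y))
  calc c ≤ ∏ i with p i, μ i (B i) := hc
    _ = Measure.pi (fun i : Subtype p => μ i) (Set.univ.pi fun i => B i) := by
      rw [Measure.pi_pi, prod_subtype _ fun _ => mem_filter_univ _]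
    _ ≤ _ := measure_mono fun a ha => hB (e.symm (a, y))
      (fun i hi => by simp [e, MeasurableEquiv.piEquivPiSubtypeProd, hi])
      (fun i hi => by
        simpa [e, MeasurableEquiv.piEquivPiSubtypeProd, hi] using Set.mem_univ_pi.1 ha ⟨i, hi⟩)

variable {X : Type*} [MeasurableSpace X] (μ : ι → Measure X) [∀ i, IsProbabilityMeasure (μ i)]
  [DecidableEq ι] {L U : Set X} [DecidablePred (· ∈ L)] [DecidablePred (· ∈ U)] {N : Finset ι}

theorem measureReal_rejectionRegion_le (hN : #N ≤ #Nᶜ) (hLm : MeasurableSet L)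
    (hUm : MeasurableSet U) (hLU : Disjoint L U) {p : ℝ} (hp : p ≤ 1)
    (hL : ∀ i ∈ N, (μ i).real L ≤ p) (hU : ∀ i ∈ N, (μ i).real U ≤ p) :
    (Measure.pi μ).real (rejectionRegion L U (#Nᶜ + 1)) ≤ 1 - (1 - p) ^ #N := by
  have hR := measurableSet_rejectionRegion (ι := ι) hLm hUm (#Nᶜ + 1)
  suffices h : ENNReal.ofReal ((1 - p) ^ #N) ≤
      Measure.pi μ (rejectionRegion L U (#Nᶜ + 1))ᶜ by
    have := (ENNReal.ofReal_le_iff_le_toReal (measure_ne_top _ _)).1 h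
    rw [← measureReal_def, probReal_compl_eq_one_sub hR] at this
    linarith
  have avoid {i : ι} {S : Set X} (hSm : MeasurableSet S) (hS : (μ i).real S ≤ p) :
      ENNReal.ofReal (1 - p) ≤ μ i Sᶜ := by
    rw [← ofReal_measureReal, probReal_compl_eq_one_sub hSm]
    exact ENNReal.ofReal_le_ofReal (by linarith)
  refine le_pi_of_forall_exists_box μ (· ∈ N) hR.compl fun x => ?_
  obtain ⟨A, hAN, hA⟩ := exists_subset_notMem_rejectionRegion hN hLU x
  refine ⟨fun i => if i ∈ A then Uᶜ else Lᶜ, ?_, fun z hzx hz => hA z hzx ?_ ?_⟩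
  · rw [filter_univ_mem, ENNReal.ofReal_pow (sub_nonneg.2 hp), ← prod_const]
    refine prod_le_prod' fun i hi => ?_
    dsimp only
    split_ifs
    exacts [avoid hUm (hU i hi), avoid hLm (hL i hi)]
  · intro i hi
    simpa [hi] using hz i (hAN hi)
  · intro i hi
    obtain ⟨hiN, hiA⟩ := Finset.mem_sdiff.1 hi
    simpa [hiA] using hz i hiN

theorem le_measureReal_rejectionRegion :
    ∏ i ∈ Nᶜ, (μ i).real U - ∏ i ∈ N, (μ i).real Uᶜ ≤
      (Measure.pi μ).real (rejectionRegion L U (#Nᶜ + 1)) := by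
  set freeIn : Set (ι → X) := Set.pi (Nᶜ : Finset ι) fun _ => U with hfreeIn
  set nullOut : Set (ι → X) := Set.pi N fun _ => Uᶜ with hnullOut
  have hsub : freeIn \ nullOut ⊆ rejectionRegion L U (#Nᶜ + 1) := by
    rintro x ⟨hfree, hnull⟩
    obtain ⟨j, hjN, hjU⟩ : ∃ j ∈ N, x j ∈ U := by simpa [hnullOut, Set.mem_pi] using hnull
    right
    rw [← card_insert_of_notMem (notMem_compl.2 hjN)]
    refine card_le_card (insert_subset (by simpa using hjU) fun i hi => ?_)
    rw [mem_filter_univ]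
    exact hfree i hi
  calc ∏ i ∈ Nᶜ, (μ i).real U - ∏ i ∈ N, (μ i).real Uᶜ
      = (Measure.pi μ).real freeIn - (Measure.pi μ).real nullOut := by
        simp only [hfreeIn, hnullOut, measureReal_def, Measure.pi_pi_finset, ENNReal.toReal_prod]
    _ ≤ (Measure.pi μ).real (freeIn \ nullOut) := le_measureReal_sdiff
    _ ≤ _ := measureReal_mono hsub

end ProductMeasure

section LocationFamily

variable (ν : Measure ℝ) [IsProbabilityMeasure ν]

lemma tendsto_measureReal_map_add_const_Ici (t : ℝ) :
    Tendsto (fun s => (ν.map (· + s)).real (Set.Ici t)) atTop (𝓝 1) := by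
  have hshift (s : ℝ) : (ν.map (· + s)).real (Set.Ici t) = ν.real (Set.Ici (t - s)) := by
    rw [map_measureReal_apply (measurable_add_const s) measurableSet_Ici,
      Set.preimage_add_const_Ici]
  simp_rw [hshift]
  have hsub : Tendsto (fun s => t - s) atTop atBot :=
    tendsto_const_nhds.add_atBot tendsto_neg_atTop_atBot
  have hlim := (tendsto_measure_Ici_atBot ν).comp hsub
  rw [measure_univ] at hlim
  exact (ENNReal.tendsto_toReal ENNReal.one_ne_top).comp hlim

theorem isLUB_typeIError_boundary {ι : Type*} [Fintype ι] [DecidableEq ι] {N : Finset ι}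
    (hN : #N ≤ #Nᶜ) {L : Set ℝ} [DecidablePred (· ∈ L)] (hL : MeasurableSet L) {t : ℝ}
    (hLt : Disjoint L (Set.Ici t)) (hν : ν.real L ≤ ν.real (Set.Ici t)) :
    IsLUB {c : ℝ | ∃ θ : ι → ℝ, (∀ i ∉ N, 0 ≤ θ i) ∧ (∀ i ∈ N, θ i = 0) ∧
        c = (Measure.pi fun i => ν.map (· + θ i)).real (rejectionRegion L (Set.Ici t) (#Nᶜ + 1))}
      (1 - (1 - ν.real (Set.Ici t)) ^ #N) := by
  have (s : ℝ) : IsProbabilityMeasure (ν.map (· + s)) :=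
    Measure.isProbabilityMeasure_map (measurable_add_const s).aemeasurable
  refine ⟨?_, fun b hb => ?_⟩
  · rintro _ ⟨θ, -, hθ, rfl⟩
    have hnull (i) (hi : i ∈ N) : ν.map (· + θ i) = ν := by simp [hθ i hi]
    exact measureReal_rejectionRegion_le _ hN hL measurableSet_Ici hLt measureReal_le_one
      (fun i hi => by rwa [hnull i hi]) (fun i hi => by rw [hnull i hi])
  · have hlim := ((tendsto_measureReal_map_add_const_Ici ν t).pow #Nᶜ).sub_const
      ((1 - ν.real (Set.Ici t)) ^ #N)
    rw [one_pow] at hlim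
    refine le_of_tendsto hlim ?_
    filter_upwards [eventually_ge_atTop 0] with s hs
    let θ : ι → ℝ := fun i => if i ∈ N then 0 else s
    have hfree (i) (hi : i ∉ N) : θ i = s := if_neg hi
    have hnull (i) (hi : i ∈ N) : θ i = 0 := if_pos hi
    have hnull' (i) (hi : i ∈ N) : ν.map (· + θ i) = ν := by simp [hnull i hi]
    calc (ν.map (· + s)).real (Set.Ici t) ^ #Nᶜ - (1 - ν.real (Set.Ici t)) ^ #N
        = ∏ i ∈ Nᶜ, (ν.map (· + θ i)).real (Set.Ici t) -
            ∏ i ∈ N, (ν.map (· + θ i)).real (Set.Ici t)ᶜ := by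
          rw [prod_eq_pow_card fun i hi => by rw [hfree i (mem_compl.1 hi)],
            prod_eq_pow_card fun i hi => by
              rw [hnull' i hi, probReal_compl_eq_one_sub measurableSet_Ici]]
      _ ≤ (Measure.pi fun i => ν.map (· + θ i)).real
            (rejectionRegion L (Set.Ici t) (#Nᶜ + 1)) := le_measureReal_rejectionRegion _
      _ ≤ b := hb ⟨θ, fun i hi => (hfree i hi).symm ▸ hs, hnull, rfl⟩

end LocationFamily

lemma one_sub_one_sub_pow_le_mul {p : ℝ} (hp : p ≤ 2) (m : ℕ) : 1 - (1 - p) ^ m ≤ m * p := by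
  have := one_add_mul_le_pow (a := -p) (by linarith) m
  rw [← sub_eq_add_neg] at this
  linarith

lemma one_sub_one_sub_pow_eq_mul_iff {p : ℝ} (hp₀ : 0 < p) (hp₁ : p ≤ 1) {m : ℕ} :
    1 - (1 - p) ^ m = m * p ↔ m ≤ 1 := by
  refine ⟨fun h => ?_, fun h => by interval_cases m <;> simp⟩
  by_contra! hm
  have hlt := one_add_mul_self_lt_rpow_one_add (s := -p) (by linarith) (by linarith)
    (p := m) (by exact_mod_cast hm)
  rw [Real.rpow_natCast, ← sub_eq_add_neg] at hlt
  linarith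

lemma card_filter_le_val_add_one {n r : ℕ} (hr : 1 ≤ r) (hrn : r ≤ n) :
    #{i : Fin n | r ≤ (i : ℕ) + 1} = n - r + 1 := by
  have hcompl := card_filter_add_card_filter_not (s := univ) fun i : Fin n => (i : ℕ) < r - 1
  rw [Fin.card_filter_val_lt, card_univ, Fintype.card_fin] at hcompl
  have hiff (i : Fin n) : r ≤ (i : ℕ) + 1 ↔ ¬ (i : ℕ) < r - 1 := by lia
  simp_rw [hiff]
  lia

theorem sup_type_one_error_on_boundary_general
    (n r : ℕ) (hr1 : ((n : ℝ) + 1) / 2 < (r : ℝ)) (hrn : r ≤ n) (α : ℝ) (hα0 : 0 < α)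
    (ν : Measure ℝ) [IsProbabilityMeasure ν] (s t : ℝ) (hst : s < t)
    (hs : ν.real (Set.Iic s) ≤ ν.real (Set.Ici t))
    (ht : ν.real (Set.Ici t) = α / ((n : ℝ) - (r : ℝ) + 1)) :
    sSup {c : ℝ | ∃ θ : Fin n → ℝ,
        (∀ i : Fin n, (i : ℕ) + 1 < r → 0 ≤ θ i) ∧
        (∀ i : Fin n, r ≤ (i : ℕ) + 1 → θ i = 0) ∧
        c = ((Measure.pi fun i : Fin n => ν.map (· + θ i))
          {x | r ≤ (Finset.univ.filter fun i : Fin n => x i ≤ s).card ∨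
               r ≤ (Finset.univ.filter fun i : Fin n => t ≤ x i).card}).toReal}
      = 1 - (1 - α / ((n : ℝ) - (r : ℝ) + 1)) ^ (n - r + 1) ∧
    1 - (1 - α / ((n : ℝ) - (r : ℝ) + 1)) ^ (n - r + 1) ≤ α ∧
    (1 - (1 - α / ((n : ℝ) - (r : ℝ) + 1)) ^ (n - r + 1) = α ↔ r = n) := by
  have hr : n + 1 < 2 * r := by
    have : (n : ℝ) + 1 < 2 * r := by linarith
    exact_mod_cast this
  have hm : (n : ℝ) - r + 1 = (n - r + 1 : ℕ) := by push_cast [hrn]; ring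
  rw [hm] at ht ⊢
  set m := n - r + 1
  have hmα : m * (α / m) = α := mul_div_cancel₀ α (by positivity)
  have hα : α / m ≤ 1 := ht ▸ measureReal_le_one
  refine ⟨?_, (one_sub_one_sub_pow_le_mul (by linarith) m).trans_eq hmα, ?_⟩
  · set N : Finset (Fin n) := {i | r ≤ (i : ℕ) + 1} with hN_def
    have hN : #N = m := card_filter_le_val_add_one (by lia) hrn
    have hNc : #Nᶜ = r - 1 := by rw [card_compl, Fintype.card_fin]; lia
    have hlub := isLUB_typeIError_boundary (N := N) ν (by lia) measurableSet_Iic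
      (Set.Iic_disjoint_Ici.2 hst.not_ge) hs
    rw [ht, hN, hNc, show r - 1 + 1 = r by lia] at hlub
    simp only [hN_def, mem_filter_univ, not_le] at hlub
    exact hlub.csSup_eq ⟨_, 0, fun _ _ => le_rfl, fun _ _ => rfl, rfl⟩
  · have := one_sub_one_sub_pow_eq_mul_iff (m := m) (div_pos hα0 (by positivity)) hα
    rw [hmα] at this
    exact this.trans (by lia)

lemma measureReal_gaussianReal_Ici (t : ℝ) :
    (gaussianReal 0 1).real (Set.Ici t) = 1 - stdNormalCDF t := by
  have := nullSingletonClass_gaussianReal (μ := 0) one_ne_zero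
  rw [measureReal_congr Ioi_ae_eq_Ici.symm, ← Set.compl_Iic,
    probReal_compl_eq_one_sub measurableSet_Iic]
  rfl

lemma measureReal_gaussianReal_Iic_neg (t : ℝ) :
    (gaussianReal 0 1).real (Set.Iic (-t)) = (gaussianReal 0 1).real (Set.Ici t) := by
  rw [← Set.neg_Ici, ← Set.neg_preimage, ← map_measureReal_apply measurable_neg measurableSet_Ici,
    gaussianReal_map_neg, neg_zero]

lemma neg_lt_self_of_half_lt_stdNormalCDF {t : ℝ} (ht : 1 / 2 < stdNormalCDF t) : -t < t := by
  by_contra! h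
  have : stdNormalCDF t ≤ (gaussianReal 0 1).real (Set.Iic (-t)) :=
    measureReal_mono (Set.Iic_subset_Iic.2 h)
  rw [measureReal_gaussianReal_Iic_neg, measureReal_gaussianReal_Ici] at this
  linarith

/-- **Supremum of the Type I error over the boundary null set.** Let `(n+1)/2 < r ≤ n`,
`α ∈ (0,1/2)`, `t = Φ⁻¹(1 − α/(n−r+1))`, and for `θ ∈ ℝⁿ` let
`c(θ) = P(#{i : Tᵢ ≤ −t} ≥ r or #{i : Tᵢ ≥ t} ≥ r)` for independent `Tᵢ ~ N(θᵢ,1)`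
(modelled by the product measure). Then over `Θ₀ᵇ` (first `r−1` coordinates nonnegative,
rest zero), `sup c = 1 − (1 − α/(n−r+1))^{n−r+1}`, and this value is `≤ α` with equality
iff `r = n`. -/
theorem sup_type_one_error_on_boundary
    (n r : ℕ) (hn : 1 ≤ n) (hr1 : ((n : ℝ) + 1) / 2 < (r : ℝ)) (hrn : r ≤ n)
    (α : ℝ) (hα0 : 0 < α) (hα1 : α < 1 / 2)
    (t : ℝ) (ht : stdNormalCDF t = 1 - α / ((n : ℝ) - (r : ℝ) + 1)) :
    sSup {c : ℝ | ∃ θ : Fin n → ℝ,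
        (∀ i : Fin n, (i : ℕ) + 1 < r → 0 ≤ θ i) ∧
        (∀ i : Fin n, r ≤ (i : ℕ) + 1 → θ i = 0) ∧
        c = ((Measure.pi fun i : Fin n => gaussianReal (θ i) 1)
          {x | r ≤ (Finset.univ.filter fun i : Fin n => x i ≤ -t).card ∨
               r ≤ (Finset.univ.filter fun i : Fin n => t ≤ x i).card}).toReal}
      = 1 - (1 - α / ((n : ℝ) - (r : ℝ) + 1)) ^ (n - r + 1) ∧
    1 - (1 - α / ((n : ℝ) - (r : ℝ) + 1)) ^ (n - r + 1) ≤ α ∧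
    (1 - (1 - α / ((n : ℝ) - (r : ℝ) + 1)) ^ (n - r + 1) = α ↔ r = n) := by
  have hα : α / ((n : ℝ) - r + 1) ≤ α :=
    div_le_self hα0.le (by linarith [(Nat.cast_le (α := ℝ)).2 hrn])
  simpa only [gaussianReal_map_add_const, zero_add] using
    sup_type_one_error_on_boundary_general n r hr1 hrn α hα0 (gaussianReal 0 1) (-t) t
      (neg_lt_self_of_half_lt_stdNormalCDF (by linarith)) (measureReal_gaussianReal_Iic_neg t).le
      (by rw [measureReal_gaussianReal_Ici, ht, sub_sub_cancel])
end
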